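/- Lemma 3, Case 3 cross variant (cross-sub-community edge insertion, other vertices of the two affected sub-communities): Let m, α, γ, w, a, b be real numbers with m > 0, α > 0, γ > 0, w ≥ 0 and a > 0, and assume the pre-update removal gain is nonpositive, i.e. −w/(2·m) + γ·a·b/(4·m²) ≤ 0. If the post-insertion removal gain is positive, i.e. −w/(2·(m + α)) + γ·a·(b + α)/(4·(m + α)²) > 0, then α > (w/(γ·a))·m − b/2. -/

import Mathlib

/-!
Clearing denominators, the removal gain after the insertion is positive exactly when
`2 w (m + α) < γ a (b + α)`. Dropping the nonnegative term `2 w α` and dividing by `γ a` gives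
`2 ((w / (γ a)) m - b / 2) < α`, with twice the required threshold on the left. Averaging this
bound with `0 < α` halves the factor.
-/

section RemovalGain

variable {K : Type*} [Field K]

/-- The modularity gain `ΔM(v → ∅, γ)` of moving a vertex `v` out of its sub-community at
resolution `γ`, in a graph of total edge weight `m`. Only the numerical data of `v` enter: the
weight `w` of the edges between `v` and the merge subsequence `U` preceding it, the degree `a` of
`v` and the degree `b` of `U`. For `m = 0` division by zero makes the value `0`. -/
def removalGain (m γ w a b : K) : K :=
  -w / (2 * m) + γ * a * b / (4 * m ^ 2)

variable {m α γ w a b : K}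

theorem removalGain_eq_div [NeZero (2 : K)] (hm : m ≠ 0) :
    removalGain m γ w a b = (γ * a * b - 2 * w * m) / (4 * m ^ 2) := by
  have h_two_mul : 2 * m ≠ 0 := mul_ne_zero two_ne_zero hm
  calc removalGain m γ w a b
      = -w * (2 * m) / (2 * m * (2 * m)) + γ * a * b / (4 * m ^ 2) := by
        rw [mul_div_mul_right _ _ h_two_mul, removalGain]
    _ = (γ * a * b - 2 * w * m) / (4 * m ^ 2) := by ring

variable [LinearOrder K] [IsStrictOrderedRing K]

theorem removalGain_pos_iff (hm : m ≠ 0) :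
    0 < removalGain m γ w a b ↔ 2 * w * m < γ * a * b := by
  have h_denom : 0 < 4 * m ^ 2 := by positivity
  rw [removalGain_eq_div hm, div_pos_iff_of_pos_right h_denom, sub_pos]

theorem lemma3_case3_cross_insertion_other_vertices_general
    (hM : m + α ≠ 0) (hα : 0 ≤ α) (hγa : 0 < γ * a) (hw : 0 ≤ w)
    (hpost : 0 < removalGain (m + α) γ w a (b + α)) :
    2 * (w / (γ * a) * m - b / 2) < α := by
  have h_lt : 2 * w * m < (b + α) * (γ * a) :=
    calc 2 * w * m ≤ 2 * w * (m + α) := by gcongr; exact le_add_of_nonneg_right hα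
      _ < γ * a * (b + α) := (removalGain_pos_iff hM).mp hpost
      _ = (b + α) * (γ * a) := mul_comm _ _
  have h_div : 2 * w * m / (γ * a) < b + α := (div_lt_iff₀ hγa).mpr h_lt
  calc 2 * (w / (γ * a) * m - b / 2) = 2 * w * m / (γ * a) - b := by ring
    _ < α := sub_left_lt_of_lt_add h_div

end RemovalGain

theorem lemma3_case3_cross_insertion_other_vertices
    (m α γ w a b : ℝ)
    (hm : 0 < m) (hα : 0 < α) (hγ : 0 < γ) (hw : 0 ≤ w) (ha : 0 < a)
    (hpre : -w / (2 * m) + γ * a * b / (4 * m ^ 2) ≤ 0)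
    (hpost : -w / (2 * (m + α)) + γ * a * (b + α) / (4 * (m + α) ^ 2) > 0) :
    α > (w / (γ * a)) * m - b / 2 := by
  linarith [lemma3_case3_cross_insertion_other_vertices_general
    (add_pos hm hα).ne' hα.le (mul_pos hγ ha) hw hpost]
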